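/- Let Z ∈ A_{n,q} be an assignment matrix, A = ZZᵀ, and M = A − (A 1_n 1_nᵀ A)/(1_nᵀ A 1_n) the modularity matrix. Then the null space of M is the orthogonal direct sum of the null space of Zᵀ (equivalently, the null space of A) and the span of the all-ones vector: N(M) = N(Zᵀ) ⊕⊥ R(1_n) = N(A) ⊕⊥ R(1_n). -/

import Mathlib

/-!
Writing `s = 1ᵀA1`, one has `M u = A (u - c • 1)` with `c = s⁻¹ (1ᵀA u)`, so `u ∈ N(M)` says exactly
that `u` differs from an element of `N(A)` by this multiple of the all-ones vector. Conversely
`M` kills `N(A)` by the same formula, and it kills `1` because `c = 1` there (if `s = 0`, then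
already `A 1 = 0`). Since `A = ZZᵀ`, the
null spaces of `A` and `Zᵀ` coincide, and `Z 1 = 1` gives `u · 1 = (Zᵀ u) · 1 = 0` for
`u ∈ N(Zᵀ)`, the orthogonality.
-/

open Matrix BigOperators

/-- `X` is an assignment matrix. -/
def IsAssignment {n q : ℕ} (X : Matrix (Fin n) (Fin q) ℝ) : Prop :=
  q ≤ n ∧ (∀ i j, X i j = 0 ∨ X i j = 1) ∧
  X *ᵥ (fun _ => (1 : ℝ)) = (fun _ => (1 : ℝ)) ∧
  Xᵀ * X = Matrix.diagonal (fun j => ∑ i, X i j)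

/-- The modularity matrix `M = A − (A 1ₙ 1ₙᵀ A)/(1ₙᵀ A 1ₙ)`. -/
noncomputable def modularityMatrix {n : ℕ} (A : Matrix (Fin n) (Fin n) ℝ) :
    Matrix (Fin n) (Fin n) ℝ :=
  A - ((fun _ => (1 : ℝ)) ⬝ᵥ (A *ᵥ fun _ => (1 : ℝ)))⁻¹ •
    Matrix.vecMulVec (A *ᵥ fun _ => (1 : ℝ)) ((fun _ => (1 : ℝ)) ᵥ* A)

/-- The rank-one correction acts inside the argument of `A`. This holds with the convention
`0⁻¹ = 0` too, so the total degree may vanish. -/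
lemma modularityMatrix_mulVec {n : ℕ} (A : Matrix (Fin n) (Fin n) ℝ) (u : Fin n → ℝ) :
    modularityMatrix A *ᵥ u = A *ᵥ (u - (((fun _ => (1 : ℝ)) ⬝ᵥ (A *ᵥ fun _ => (1 : ℝ)))⁻¹ *
      ((fun _ => (1 : ℝ)) ⬝ᵥ (A *ᵥ u))) • (fun _ => (1 : ℝ))) := by
  rw [modularityMatrix, Matrix.sub_mulVec, Matrix.smul_mulVec, Matrix.vecMulVec_mulVec,
    ← Matrix.dotProduct_mulVec, Matrix.mulVec_sub, Matrix.mulVec_smul, op_smul_eq_smul, smul_smul]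

lemma mulVec_mul_transpose_eq_zero_iff {n q : ℕ} (Z : Matrix (Fin n) (Fin q) ℝ)
    (u : Fin n → ℝ) : (Z * Zᵀ) *ᵥ u = 0 ↔ Zᵀ *ᵥ u = 0 := by
  have h := Matrix.self_mul_conjTranspose_mulVec_eq_zero Z u
  rwa [Matrix.conjTranspose_eq_transpose_of_trivial] at h

/-- For an ideal graph `A = ZZᵀ` with modularity matrix `M`, the null space of `M` is the
orthogonal direct sum of the null space of `Zᵀ` (equivalently of `A`) and the span of the
all-ones vector: `N(M) = N(Zᵀ) ⊕⊥ R(1ₙ) = N(A) ⊕⊥ R(1ₙ)`. -/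
theorem nullspace_modularity_decomposition {n q : ℕ}
    (Z : Matrix (Fin n) (Fin q) ℝ) (hZ : IsAssignment Z)
    (A : Matrix (Fin n) (Fin n) ℝ) (hA : A = Z * Zᵀ)
    (M : Matrix (Fin n) (Fin n) ℝ) (hM : M = modularityMatrix A) :
    LinearMap.ker M.mulVecLin =
      LinearMap.ker Zᵀ.mulVecLin ⊔ Submodule.span ℝ {(fun _ => (1 : ℝ) : Fin n → ℝ)} ∧
    LinearMap.ker Zᵀ.mulVecLin = LinearMap.ker A.mulVecLin ∧
    (∀ u ∈ LinearMap.ker Zᵀ.mulVecLin,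
      ∀ w ∈ Submodule.span ℝ {(fun _ => (1 : ℝ) : Fin n → ℝ)}, u ⬝ᵥ w = 0) := by
  obtain ⟨-, -, hZ1, -⟩ := hZ
  have hker : ∀ u, A *ᵥ u = 0 ↔ Zᵀ *ᵥ u = 0 := fun u => by
    rw [hA]; exact mulVec_mul_transpose_eq_zero_iff Z u
  refine ⟨le_antisymm ?_ (sup_le ?_ ?_), ?_, ?_⟩
  · intro u hu
    rw [LinearMap.mem_ker, Matrix.mulVecLin_apply, hM, modularityMatrix_mulVec, hker] at hu
    exact Submodule.mem_sup.2 ⟨_, hu, _,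
      Submodule.smul_mem _ _ (Submodule.mem_span_singleton_self _), sub_add_cancel _ _⟩
  · intro u hu
    have hAu : A *ᵥ u = 0 := (hker u).2 hu
    rw [LinearMap.mem_ker, Matrix.mulVecLin_apply, hM, modularityMatrix_mulVec, hAu]
    simp [hAu]
  · rw [Submodule.span_singleton_le_iff_mem, LinearMap.mem_ker, Matrix.mulVecLin_apply, hM,
      modularityMatrix_mulVec]
    by_cases hs : (fun _ => (1 : ℝ)) ⬝ᵥ (A *ᵥ fun _ => (1 : ℝ)) = 0
    · -- Here `0 = 1ᵀA1 = ‖Zᵀ1‖²`, so already `A 1 = 0`.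
      have h0 : A *ᵥ (fun _ => (1 : ℝ)) = 0 := by
        rw [hker, ← dotProduct_self_eq_zero]
        rw [hA, ← Matrix.mulVec_mulVec, Matrix.dotProduct_mulVec, ← Matrix.mulVec_transpose] at hs
        exact hs
      rw [hs, _root_.inv_zero, zero_mul, zero_smul, sub_zero, h0]
    · rw [inv_mul_cancel₀ hs, one_smul, sub_self, Matrix.mulVec_zero]
  · ext u
    exact (hker u).symm
  · intro u hu w hw
    obtain ⟨c, rfl⟩ := Submodule.mem_span_singleton.1 hw
    have hu' : Zᵀ *ᵥ u = 0 := hu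
    rw [dotProduct_smul, ← hZ1, Matrix.dotProduct_mulVec, ← Matrix.mulVec_transpose, hu',
      zero_dotProduct, smul_zero]
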